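/- arXiv:2510.27574 — 2 statements merged into one kernel-verified Lean document; each statement's English description precedes it below -/
import Mathlib

section
/- For all n ≥ 1 and 1 ≤ k ≤ n, the number f_FR(n,k) of Fubini rankings with n competitors having exactly k lucky cars satisfies f_FR(n,k) = ∑ n!/(c_1!·c_2!⋯c_k!), where the sum ranges over all compositions (c_1,c_2,…,c_k) of n into exactly k positive parts. -/
/-- A Fubini ranking with `n` competitors: entries are in `[n]` (represented by `Fin n`,
where `i : Fin n` stands for the rank `i.val + 1`), and for every rank `r` occurring among
the entries, the number of indices `j` whose entry is strictly smaller than `r` equals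
`r - 1` (i.e. `r.val` in the `Fin n` encoding). -/
def IsFubini {n : ℕ} (α : Fin n → Fin n) : Prop :=
  ∀ r : Fin n, (∃ i, α i = r) →
    (Finset.univ.filter (fun j => α j < r)).card = (r : ℕ)

/-- The set of lucky cars of `α`: car `i` is lucky iff it is the first occurrence of its
value, i.e. `α j ≠ α i` for all `j < i`. -/
def luckySet {n : ℕ} (α : Fin n → Fin n) : Finset (Fin n) :=
  Finset.univ.filter (fun i => ∀ j, j < i → α j ≠ α i)

/-- The number of lucky cars of `α`. -/
def lucky {n : ℕ} (α : Fin n → Fin n) : ℕ := (luckySet α).card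

instance {n : ℕ} : DecidablePred (IsFubini (n := n)) := fun α =>
  inferInstanceAs (Decidable (∀ r : Fin n, (∃ i, α i = r) →
    (Finset.univ.filter (fun j => α j < r)).card = (r : ℕ)))

/-- The number of Fubini rankings with `n` competitors having exactly `k` lucky cars. -/
noncomputable def fFR (n k : ℕ) : ℕ :=
  Nat.card {α : Fin n → Fin n // IsFubini α ∧ lucky α = k}

open Finset

/-- The number of words `Fin n → ι` in which each letter `i` occurs exactly `c i` times is a
multinomial coefficient. -/
theorem card_filter_fiber_card_eq {ι : Type*} [Fintype ι] [DecidableEq ι] (n : ℕ) (c : ι → ℕ)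
    (hc : ∑ i, c i = n) :
    #{g : Fin n → ι | ∀ i, #{j | g j = i} = c i} = n.factorial / ∏ i, (c i).factorial := by
  have h := MvPolynomial.coeff_linearCombination_X_pow_of_fintype (fun _ : ι => (1 : ℕ))
    (Finsupp.equivFunOnFinite.symm c) n
  have hmon (g : Fin n → ι) : ∏ j, (MvPolynomial.X (g j) : MvPolynomial ι ℕ) =
      MvPolynomial.monomial (∑ j, Finsupp.single (g j) 1) 1 := by
    simp [MvPolynomial.X, MvPolynomial.monomial_sum_one]
  have hsupp : (Finsupp.equivFunOnFinite.symm c).support ⊆ univ := subset_univ _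
  rw [Finsupp.sum_fintype _ _ (fun _ => rfl)] at h
  simp only [one_smul, sum_pow', hmon, MvPolynomial.coeff_sum, MvPolynomial.coeff_monomial,
    Fintype.piFinset_univ, Finsupp.multinomial_eq_of_support_subset hsupp,
    Finsupp.equivFunOnFinite_symm_apply_apply, hc, if_true, sum_boole, one_pow,
    Finsupp.prod, prod_const_one, mul_one, Nat.cast_id, Nat.multinomial] at h
  rw [← h]
  congr 1
  ext g
  simp [Finsupp.ext_iff, Finsupp.single_apply]

/-- The number of lucky cars is the number of distinct values. -/
theorem lucky_eq_card_image {n : ℕ} (α : Fin n → Fin n) : lucky α = #(univ.image α) := by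
  rw [lucky, ← card_image_of_injOn (f := α) (s := luckySet α)]
  · congr 1
    ext r
    simp only [luckySet, mem_image, mem_filter, mem_univ, true_and]
    refine ⟨fun ⟨i, _, hi⟩ => ⟨i, hi⟩, fun ⟨i, hi⟩ => ?_⟩
    obtain ⟨m, hm, hmin⟩ := WellFounded.has_min (wellFounded_lt (α := Fin n)) {j | α j = r} ⟨i, hi⟩
    exact ⟨m, fun j hj h => hmin j (h.trans hm) hj, hm⟩
  · intro i hi j hj hij
    simp only [luckySet, coe_filter, mem_univ, true_and, Set.mem_ofPred_eq] at hi hj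
    rcases lt_trichotomy i j with h | h | h
    · exact absurd hij (hj i h)
    · exact h
    · exact absurd hij.symm (hi j h)

/-- The ranking in which the rank of competitor `i` counts the competitors with a smaller score. -/
def rankingOfScore {n k : ℕ} (g : Fin n → Fin k) (i : Fin n) : Fin n :=
  ⟨#{j | g j < g i}, by
    simpa using card_lt_univ_of_notMem (s := {j | g j < g i}) (x := i) (by simp)⟩

theorem rankingOfScore_lt_iff {n k : ℕ} (g : Fin n → Fin k) (i j : Fin n) :
    rankingOfScore g i < rankingOfScore g j ↔ g i < g j := by
  simp only [rankingOfScore, Fin.mk_lt_mk]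
  refine ⟨fun h => ?_, fun h => card_lt_card ?_⟩
  · by_contra! hle
    refine h.not_ge (card_le_card fun l hl => ?_)
    simp only [mem_filter, mem_univ, true_and] at hl ⊢
    exact hl.trans_le hle
  · refine (ssubset_iff_of_subset fun l hl => ?_).2 ⟨i, by simpa using h, by simp⟩
    simp only [mem_filter, mem_univ, true_and] at hl ⊢
    exact hl.trans h

theorem isFubini_rankingOfScore {n k : ℕ} (g : Fin n → Fin k) : IsFubini (rankingOfScore g) := by
  rintro _ ⟨i, rfl⟩
  simp only [rankingOfScore_lt_iff]
  rfl

/-- For surjective scores, the ranking is a strictly increasing function of the score. -/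
theorem exists_strictMono_comp_eq_rankingOfScore {n k : ℕ} {g : Fin n → Fin k}
    (hg : Function.Surjective g) : ∃ F : Fin k → Fin n, StrictMono F ∧ F ∘ g = rankingOfScore g := by
  refine ⟨fun r => rankingOfScore g (hg r).choose, fun r s hrs => ?_, funext fun i => ?_⟩
  · rwa [rankingOfScore_lt_iff, (hg r).choose_spec, (hg s).choose_spec]
  · simp only [Function.comp_apply, rankingOfScore, (hg (g i)).choose_spec]

theorem lucky_rankingOfScore {n k : ℕ} {g : Fin n → Fin k} (hg : Function.Surjective g) :
    lucky (rankingOfScore g) = k := by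
  obtain ⟨F, hF, h⟩ := exists_strictMono_comp_eq_rankingOfScore hg
  rw [lucky_eq_card_image, ← h, ← image_image, image_univ_of_surjective hg,
    card_image_of_injective _ hF.injective, card_univ, Fintype.card_fin]

theorem rankingOfScore_injOn_surjective {n k : ℕ} :
    Set.InjOn (rankingOfScore (n := n) (k := k)) {g | Function.Surjective g} := by
  intro g hg g' hg' hgg'
  obtain ⟨F, hF, h⟩ := exists_strictMono_comp_eq_rankingOfScore hg
  obtain ⟨F', hF', h'⟩ := exists_strictMono_comp_eq_rankingOfScore hg'
  have hcomp : F ∘ g = F' ∘ g' := by rw [h, h', hgg']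
  have hFF' : F = F' := by
    rw [← hF.range_inj hF', ← Function.Surjective.range_comp hg F, hcomp,
      Function.Surjective.range_comp hg' F']
  subst hFF'
  exact hF.injective.comp_left hcomp

theorem exists_surjective_rankingOfScore_eq {n k : ℕ} {α : Fin n → Fin n} (hα : IsFubini α)
    (hk : lucky α = k) : ∃ g : Fin n → Fin k, Function.Surjective g ∧ rankingOfScore g = α := by
  rw [lucky_eq_card_image] at hk
  let e := (univ.image α).orderIsoOfFin hk
  refine ⟨fun i => e.symm ⟨α i, mem_image_of_mem α (mem_univ i)⟩, fun r => ?_, funext fun i => ?_⟩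
  · obtain ⟨i, -, hi⟩ := mem_image.1 (e r).2
    exact ⟨i, by simp [hi]⟩
  · ext
    simpa [rankingOfScore] using hα (α i) ⟨i, rfl⟩

theorem fFR_eq_card_surjective (n k : ℕ) :
    fFR n k = #{g : Fin n → Fin k | Function.Surjective g} := by
  rw [fFR, Nat.card_eq_fintype_card, Fintype.card_subtype]
  refine (card_nbij rankingOfScore (fun g hg => ?_) ?_ fun α hα => ?_).symm
  · rw [mem_coe, mem_filter] at hg ⊢
    exact ⟨mem_univ _, isFubini_rankingOfScore g, lucky_rankingOfScore hg.2⟩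
  · simpa using rankingOfScore_injOn_surjective
  · simp only [coe_filter, mem_univ, true_and, Set.mem_ofPred_eq] at hα
    obtain ⟨g, hg, h⟩ := exists_surjective_rankingOfScore_eq hα.1 hα.2
    exact ⟨g, by simpa using hg, h⟩

/-- `f_FR(n,k) = ∑ n!/(c₁!·c₂!⋯c_k!)`, the sum ranging over all
compositions `(c₁,…,c_k)` of `n` into exactly `k` positive parts. -/
theorem fFR_eq_sum_multinomials (n k : ℕ) (hn : 1 ≤ n) (hk : 1 ≤ k) (hkn : k ≤ n) :
    fFR n k
      = ∑ c ∈ (Finset.Nat.antidiagonalTuple k n).filter (fun c => ∀ i, 0 < c i),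
          Nat.factorial n / ∏ i, Nat.factorial (c i) := by
  have hpos (g : Fin n → Fin k) :
      Function.Surjective g ↔ ∀ r, 0 < #{j | g j = r} := by
    simp [Function.Surjective, card_pos, filter_nonempty_iff]
  rw [fFR_eq_card_surjective, card_eq_sum_card_fiberwise (f := fun g r => #{j | g j = r})
    (t := (Finset.Nat.antidiagonalTuple k n).filter (fun c => ∀ i, 0 < c i))]
  · refine sum_congr rfl fun c hc => ?_
    rw [mem_filter, Finset.Nat.mem_antidiagonalTuple] at hc
    rw [← card_filter_fiber_card_eq n c hc.1, filter_filter]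
    congr 1
    ext g
    simp only [mem_filter, mem_univ, true_and, funext_iff, hpos]
    exact ⟨And.right, fun h => ⟨fun r => (h r).symm ▸ hc.2 r, h⟩⟩
  · intro g hg
    simp only [coe_filter, mem_univ, true_and, Set.mem_ofPred_eq,
      Finset.Nat.mem_antidiagonalTuple] at hg ⊢
    refine ⟨?_, (hpos g).1 hg⟩
    simpa using (card_eq_sum_card_fiberwise (f := g) (s := univ) (t := univ) (by simp)).symm
end

section
/- For every n ≥ 1, the total number of lucky cars over all weakly increasing Fubini rankings with n competitors satisfies 2·∑_{α ∈ FR_n^↑} lucky(α) = (n+1)·2^{n−1}; equivalently, since |FR_n^↑| = 2^{n−1}, the expected number of lucky cars of a uniformly random weakly increasing Fubini ranking with n competitors is (n+1)/2. -/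
instance {n : ℕ} : DecidablePred (Monotone : (Fin n → Fin n) → Prop) := fun f =>
  inferInstanceAs (Decidable (∀ a b : Fin n, a ≤ b → f a ≤ f b))

/-- In a weakly increasing Fubini ranking the competitors ranked before `α i` are exactly those
whose index is smaller than `α i`. -/
lemma IsFubini.apply_lt_apply_iff {n : ℕ} {α : Fin n → Fin n} (hα : IsFubini α)
    (hmono : Monotone α) (i j : Fin n) : α j < α i ↔ j < α i := by
  have hcard := hα (α i) ⟨i, rfl⟩
  constructor
  · intro hj
    by_contra! hle
    have hsub : Finset.Iic j ⊆ Finset.univ.filter (fun k => α k < α i) := fun k hk => by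
      simpa using (hmono (Finset.mem_Iic.mp hk)).trans_lt hj
    have := Finset.card_le_card hsub
    rw [hcard, Fin.card_Iic] at this
    exact absurd (Fin.le_def.mp hle) (by omega)
  · intro hj
    by_contra! hle
    have hsub : Finset.univ.filter (fun k => α k < α i) ⊆ Finset.Iio j := fun k hk => by
      rw [Finset.mem_Iio]
      by_contra! hjk
      exact (hle.trans (hmono hjk)).not_gt (Finset.mem_filter.mp hk).2
    have := Finset.card_le_card hsub
    rw [hcard, Fin.card_Iio] at this
    exact absurd (Fin.lt_def.mp hj) (by omega)

lemma IsFubini.apply_le_self {n : ℕ} {α : Fin n → Fin n} (hα : IsFubini α)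
    (hmono : Monotone α) (i : Fin n) : α i ≤ i :=
  not_lt.mp fun h => lt_irrefl _ ((hα.apply_lt_apply_iff hmono i i).mpr h)

lemma IsFubini.apply_apply {n : ℕ} {α : Fin n → Fin n} (hα : IsFubini α)
    (hmono : Monotone α) (i : Fin n) : α (α i) = α i :=
  le_antisymm (hmono (hα.apply_le_self hmono i)) <|
    not_lt.mp fun h => lt_irrefl _ ((hα.apply_lt_apply_iff hmono i (α i)).mp h)

lemma mem_luckySet {n : ℕ} {α : Fin n → Fin n} {i : Fin n} :
    i ∈ luckySet α ↔ ∀ j, j < i → α j ≠ α i := by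
  simp [luckySet]

/-- The lucky cars of a weakly increasing Fubini ranking are its fixed points. -/
lemma IsFubini.mem_luckySet_iff {n : ℕ} {α : Fin n → Fin n} (hα : IsFubini α)
    (hmono : Monotone α) (i : Fin n) : i ∈ luckySet α ↔ α i = i := by
  rw [mem_luckySet]
  constructor
  · intro h
    by_contra hne
    exact h _ (lt_of_le_of_ne (hα.apply_le_self hmono i) hne) (hα.apply_apply hmono i)
  · intro h j hj
    exact ((hα.apply_lt_apply_iff hmono i j).mpr (h.symm ▸ hj)).ne

/-- The map sending `i` to the largest element of `S` that is at most `i`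
(or to `0` if there is none). -/
noncomputable def blockStart {m : ℕ} (S : Finset (Fin (m + 1))) (i : Fin (m + 1)) : Fin (m + 1) :=
  (S.filter (· ≤ i)).sup id

lemma blockStart_le {m : ℕ} (S : Finset (Fin (m + 1))) (i : Fin (m + 1)) :
    blockStart S i ≤ i :=
  Finset.sup_le fun _ hj => (Finset.mem_filter.mp hj).2

lemma le_blockStart {m : ℕ} {S : Finset (Fin (m + 1))} {i j : Fin (m + 1)} (hj : j ∈ S)
    (hji : j ≤ i) : j ≤ blockStart S i :=
  Finset.le_sup (f := id) (Finset.mem_filter.mpr ⟨hj, hji⟩)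

lemma blockStart_mem {m : ℕ} {S : Finset (Fin (m + 1))} (hS : 0 ∈ S) (i : Fin (m + 1)) :
    blockStart S i ∈ S := by
  have hne : (S.filter (· ≤ i)).Nonempty :=
    ⟨0, Finset.mem_filter.mpr ⟨hS, Fin.zero_le i⟩⟩
  obtain ⟨j, hj, hji⟩ := Finset.exists_mem_eq_sup _ hne id
  rw [blockStart, hji]
  exact (Finset.mem_filter.mp hj).1

lemma blockStart_eq_self {m : ℕ} {S : Finset (Fin (m + 1))} {i : Fin (m + 1)} (hi : i ∈ S) :
    blockStart S i = i :=
  le_antisymm (blockStart_le S i) (le_blockStart hi le_rfl)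

lemma blockStart_monotone {m : ℕ} (S : Finset (Fin (m + 1))) : Monotone (blockStart S) :=
  fun _ _ hij => Finset.sup_mono <|
    Finset.monotone_filter_right S fun _ _ hk => le_trans hk hij

lemma isFubini_blockStart {m : ℕ} {S : Finset (Fin (m + 1))} (hS : 0 ∈ S) :
    IsFubini (blockStart S) := by
  rintro _ ⟨i, rfl⟩
  have hIio : Finset.univ.filter (fun j => blockStart S j < blockStart S i)
      = Finset.Iio (blockStart S i) := by
    ext j
    simp only [Finset.mem_filter, Finset.mem_univ, true_and, Finset.mem_Iio]
    constructor
    · intro h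
      by_contra! hle
      exact (le_blockStart (blockStart_mem hS i) hle).not_gt h
    · exact (blockStart_le S j).trans_lt
  rw [hIio, Fin.card_Iio]

lemma luckySet_blockStart {m : ℕ} {S : Finset (Fin (m + 1))} (hS : 0 ∈ S) :
    luckySet (blockStart S) = S := by
  ext i
  rw [(isFubini_blockStart hS).mem_luckySet_iff (blockStart_monotone S)]
  exact ⟨fun h => h ▸ blockStart_mem hS i, blockStart_eq_self⟩

lemma blockStart_luckySet {m : ℕ} {α : Fin (m + 1) → Fin (m + 1)} (hα : IsFubini α)
    (hmono : Monotone α) : blockStart (luckySet α) = α := by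
  funext i
  refine le_antisymm (Finset.sup_le fun j hj => ?_) (le_blockStart ?_ ?_)
  · obtain ⟨hj, hji⟩ := Finset.mem_filter.mp hj
    rw [id, ← (hα.mem_luckySet_iff hmono j).mp hj]
    exact hmono hji
  · exact (hα.mem_luckySet_iff hmono _).mpr (hα.apply_apply hmono i)
  · exact hα.apply_le_self hmono i

lemma zero_mem_luckySet {m : ℕ} (α : Fin (m + 1) → Fin (m + 1)) : 0 ∈ luckySet α :=
  mem_luckySet.mpr fun j hj => absurd hj (Fin.not_lt_zero j)

/-- Twice the total size of the subsets containing a fixed element `a`, obtained by pairing `S`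
with `insert a Sᶜ`. -/
lemma two_mul_sum_card_filter_mem {ι : Type*} [Fintype ι] [DecidableEq ι] (a : ι) :
    2 * ∑ S ∈ Finset.univ.filter (fun S : Finset ι => a ∈ S), S.card
      = (Fintype.card ι + 1) * 2 ^ (Fintype.card ι - 1) := by
  have hinv : ∑ S ∈ Finset.univ.filter (fun S : Finset ι => a ∈ S), S.card
      = ∑ S ∈ Finset.univ.filter (fun S : Finset ι => a ∈ S), (insert a Sᶜ).card := by
    refine Finset.sum_nbij' (fun S => insert a Sᶜ) (fun S => insert a Sᶜ) ?_ ?_ ?_ ?_ ?_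
    · simp
    · simp
    · intro S hS
      have : a ∈ S := by simpa using hS
      ext x
      by_cases hx : x = a <;> simp [hx, this]
    · intro S hS
      have : a ∈ S := by simpa using hS
      ext x
      by_cases hx : x = a <;> simp [hx, this]
    · intro S hS
      have : a ∈ S := by simpa using hS
      congr 1
      ext x
      by_cases hx : x = a <;> simp [hx, this]
  have hpair : ∀ S ∈ Finset.univ.filter (fun S : Finset ι => a ∈ S),
      S.card + (insert a Sᶜ).card = Fintype.card ι + 1 := fun S hS => by
    rw [Finset.card_insert_of_notMem (by simpa using hS), ← add_assoc,
      Finset.card_add_card_compl]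
  have hIcc : Finset.univ.filter (fun S : Finset ι => a ∈ S)
      = Finset.Icc {a} Finset.univ := by
    ext S
    simp
  rw [two_mul]
  nth_rewrite 2 [hinv]
  rw [← Finset.sum_add_distrib, Finset.sum_congr rfl hpair, Finset.sum_const, hIcc,
    Finset.card_Icc_finset (Finset.subset_univ _), Finset.card_singleton, Finset.card_univ,
    smul_eq_mul, mul_comm]

/-- The total number of lucky cars over all weakly increasing Fubini
rankings with `n` competitors satisfies `2·∑_{α ∈ FR_n^↑} lucky(α) = (n+1)·2^(n−1)`
(equivalently, the expected number of lucky cars is `(n+1)/2`). -/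
theorem total_lucky_weakly_increasing_fubini (n : ℕ) (hn : 1 ≤ n) :
    2 * ∑ α ∈ Finset.univ.filter (fun α : Fin n → Fin n => IsFubini α ∧ Monotone α),
          lucky α
      = (n + 1) * 2 ^ (n - 1) := by
  obtain ⟨m, rfl⟩ := Nat.exists_eq_add_of_le' hn
  have hbij : ∑ α ∈ Finset.univ.filter
        (fun α : Fin (m + 1) → Fin (m + 1) => IsFubini α ∧ Monotone α), lucky α
      = ∑ S ∈ Finset.univ.filter (fun S : Finset (Fin (m + 1)) => 0 ∈ S), S.card := by
    refine Finset.sum_nbij' luckySet blockStart ?_ ?_ ?_ ?_ fun _ _ => rfl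
    · intro α _
      simpa using zero_mem_luckySet α
    · intro S hS
      have hS : 0 ∈ S := by simpa using hS
      simpa using ⟨isFubini_blockStart hS, blockStart_monotone S⟩
    · intro α hα
      obtain ⟨hα, hmono⟩ := (Finset.mem_filter.mp hα).2
      exact blockStart_luckySet hα hmono
    · intro S hS
      exact luckySet_blockStart (by simpa using hS)
  rw [hbij, two_mul_sum_card_filter_mem, Fintype.card_fin]
end
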